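/- Let 𝕏 be a σ-finite measure space and ℳ, 𝒩 Banach L^0(𝕏)-modules. Define |α|_ε := ⋁{ |Σ_{i=1}^n ω(v_i)η(w_i)| : Σ_{i=1}^n v_i ⊗ w_i = α, ω ∈ 𝔻_{ℳ*}, η ∈ 𝔻_{𝒩*} } for α ∈ ℳ ⊗ 𝒩, the supremum being over all representations of α and all ω, η in the unit discs of the duals. Then |·|_ε is a pointwise norm on ℳ ⊗ 𝒩 (i.e. |α|_ε = 0 if and only if α = 0, |α+β|_ε ≤ |α|_ε + |β|_ε, and |f·α|_ε = |f||α|_ε for every f ∈ L^0(𝕏)); moreover |v ⊗ w|_ε = |v||w| for every v ∈ ℳ and w ∈ 𝒩. -/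

import Mathlib

/-!
A representation `α = ∑ vᵢ ⊗ wᵢ` enters `|∑ ω(vᵢ) η(wᵢ)|` only through `(ω ⊗ η) α`, so `|α|_ε` is
the supremum of `|(ω ⊗ η) α|` over the dual discs; it exists since `L⁰` is Dedekind complete.
Norming functionals, provided by the Hahn–Banach theorem for sublinear maps into `L⁰`, yield
`|v ⊗ w|_ε = |v||w|`; they also show that `|α|_ε = 0` forces `(ω ⊗ id) α = 0` for all `ω`. As `L⁰`
is von Neumann regular, every `x ∈ ℳ` admits a functional `ω` with `ω(x) x = x`, a multiple of a
norming one, and such functionals remove the terms of a representation of `α` one by one, so that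
`α = 0`. All of this takes place over an arbitrary Dedekind complete regular `f`-ring.
-/

open MeasureTheory Filter Set TensorProduct

noncomputable section

namespace Paper

variable {X : Type*} [MeasurableSpace X]

/-- The space `L⁰(𝕏)` of real-valued measurable functions up to `μ`-a.e. equality. -/
abbrev L0 (μ : Measure X) : Type _ := X →ₘ[μ] ℝ

instance (μ : Measure X) : CommRing (L0 μ) :=
  { (inferInstance : AddCommGroup (L0 μ)), (inferInstance : CommMonoid (L0 μ)) with
    left_distrib := fun a b c => AEEqFun.toGerm_injective <| by
      simp only [AEEqFun.mul_toGerm, AEEqFun.add_toGerm, mul_add]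
    right_distrib := fun a b c => AEEqFun.toGerm_injective <| by
      simp only [AEEqFun.mul_toGerm, AEEqFun.add_toGerm, add_mul]
    zero_mul := fun a => AEEqFun.toGerm_injective <| by
      simp only [AEEqFun.mul_toGerm, AEEqFun.zero_toGerm, zero_mul]
    mul_zero := fun a => AEEqFun.toGerm_injective <| by
      simp only [AEEqFun.mul_toGerm, AEEqFun.zero_toGerm, mul_zero] }

/-- The distance on `L⁰(𝕏)` inducing the topology of convergence in measure, defined through
the auxiliary finite measure `μ.toFinite` (which satisfies `μ ≪ μ.toFinite ≪ μ`). -/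
noncomputable def dL0 (μ : Measure X) [SFinite μ] (f g : L0 μ) : ℝ :=
  ∫ x, min |f x - g x| 1 ∂(μ.toFinite)

/-- A Banach `L⁰(𝕏)`-module: a module over `L⁰(𝕏)` endowed with a pointwise norm, complete
with respect to the induced distance. -/
class BanachMod (μ : Measure X) [SFinite μ] (M : Type*) [AddCommGroup M]
    [Module (L0 μ) M] where
  pn : M → L0 μ
  pn_nonneg : ∀ v : M, 0 ≤ pn v
  pn_eq_zero : ∀ v : M, pn v = 0 ↔ v = 0
  pn_add_le : ∀ v w : M, pn (v + w) ≤ pn v + pn w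
  pn_smul : ∀ (f : L0 μ) (v : M), pn (f • v) = |f| * pn v
  complete : ∀ u : ℕ → M,
    (∀ ε : ℝ, 0 < ε → ∃ N : ℕ, ∀ m ≥ N, ∀ n ≥ N, dL0 μ (pn (u m - u n)) 0 < ε) →
    ∃ v : M, Tendsto (fun n => dL0 μ (pn (u n - v)) 0) atTop (nhds 0)

/-- The pointwise norm of a Banach `L⁰(𝕏)`-module, with the measure explicit. -/
noncomputable def pn (μ : Measure X) [SFinite μ] {M : Type*} [AddCommGroup M]
    [Module (L0 μ) M] [BanachMod μ M] (v : M) : L0 μ :=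
  BanachMod.pn v

/-- The distance on a Banach `L⁰(𝕏)`-module. -/
noncomputable def dM (μ : Measure X) [SFinite μ] {M : Type*} [AddCommGroup M]
    [Module (L0 μ) M] [BanachMod μ M] (v w : M) : ℝ :=
  dL0 μ (pn μ (v - w)) 0

section Defs

variable (μ : Measure X) [SFinite μ]
variable {M N : Type*} [AddCommGroup M] [Module (L0 μ) M] [BanachMod μ M]
  [AddCommGroup N] [Module (L0 μ) N] [BanachMod μ N]

/-- The set of admissible bounds of a map between Banach `L⁰(𝕏)`-modules; the pointwise norm
`|T|` of a homomorphism is the infimum of this set. -/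
def homBddSet (T : M → N) : Set (L0 μ) :=
  {g | 0 ≤ g ∧ ∀ v, pn μ (T v) ≤ g * pn μ v}

/-- A homomorphism of Banach `L⁰(𝕏)`-modules: an `L⁰(𝕏)`-linear map admitting a bound
`g ∈ L⁰(𝕏)⁺` with `|T v| ≤ g |v|` (equivalently, `L⁰(𝕏)`-linear and continuous). -/
def IsHom (T : M →ₗ[L0 μ] N) : Prop :=
  ∃ g, g ∈ homBddSet μ (⇑T)

/-- The set of admissible bounds of an `L⁰(𝕏)`-valued map (for elements of the dual module). -/
def dualBddSet (ω : M → L0 μ) : Set (L0 μ) :=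
  {g | 0 ≤ g ∧ ∀ v, |ω v| ≤ g * pn μ v}

/-- Membership in the dual module `ℳ*`: an `L⁰(𝕏)`-linear map `ω : ℳ → L⁰(𝕏)` admitting a
bound `g ∈ L⁰(𝕏)⁺` with `|ω v| ≤ g |v|`. -/
def IsDual (ω : M →ₗ[L0 μ] L0 μ) : Prop :=
  ∃ g, g ∈ dualBddSet μ (⇑ω)

/-- Membership in the unit disc `𝔻_{ℳ*}` of the dual module: `|ω| ≤ 1`, equivalently
`|ω v| ≤ |v|` for every `v`. -/
def InDualDisc (ω : M →ₗ[L0 μ] L0 μ) : Prop :=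
  ∀ v, |ω v| ≤ pn μ v

/-- The family of pointwise norms `|s - ∑_{i ∈ F ∪ G} v i|` for `G` finite disjoint from `F`,
whose `F`-indexed inf-sup being `0` defines `s = ∑_{i∈I} v i`. -/
def sumUB {I : Type*} (v : I → M) (s : M) (F : Finset I) : Set (L0 μ) :=
  {g | ∃ G : Finset I, Disjoint G F ∧ g = pn μ (s - (∑ i ∈ F, v i + ∑ i ∈ G, v i))}

/-- `HasSumMod μ v s` means that the family `{v_i}` is summable in the Banach `L⁰(𝕏)`-module
with sum `s`, i.e. `⋀_F ⋁_G |s - ∑_{i ∈ F ∪ G} v_i| = 0` (the inner suprema being the values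
of `b`, and the outer infimum being `0`). -/
def HasSumMod {I : Type*} (v : I → M) (s : M) : Prop :=
  ∃ b : Finset I → L0 μ, (∀ F, IsLUB (sumUB μ v s F) (b F)) ∧ IsGLB (Set.range b) 0

/-- A family in a Banach `L⁰(𝕏)`-module is summable if it has a sum. -/
def SummableMod {I : Type*} (v : I → M) : Prop :=
  ∃ s, HasSumMod μ v s

/-- The partial sums `∑_{i ∈ F} |v i|` of the pointwise norms of a family; the element `|v|₁`
of `ℓ₁(I, ℳ)` is the supremum of this set. -/
def l1PartialSums {I : Type*} (v : I → M) : Set (L0 μ) :=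
  {g | ∃ F : Finset I, g = ∑ i ∈ F, pn μ (v i)}

/-- Membership in `ℓ₁(I, ℳ)`: the partial sums of the pointwise norms admit a supremum
(equivalently, an upper bound) in `L⁰(𝕏)`. -/
def Meml1 {I : Type*} (v : I → M) : Prop :=
  ∃ b, IsLUB (l1PartialSums μ v) b

/-- The partial sums `∑_{i ∈ F} |v i|` for an `L⁰(𝕏)`-valued family. -/
def l1PartialSumsF {I : Type*} (v : I → L0 μ) : Set (L0 μ) :=
  {g | ∃ F : Finset I, g = ∑ i ∈ F, |v i|}

/-- Membership in `ℓ₁(I, L⁰(𝕏))`. -/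
def Meml1F {I : Type*} (v : I → L0 μ) : Prop :=
  ∃ b, IsLUB (l1PartialSumsF μ v) b

/-- The set whose infimum defines the projective pointwise norm: all values
`∑_{i=1}^n |v_i||w_i|` over representations `α = ∑_{i=1}^n v_i ⊗ w_i`. -/
def piReps (α : M ⊗[L0 μ] N) : Set (L0 μ) :=
  {g | ∃ (n : ℕ) (v : Fin n → M) (w : Fin n → N),
    α = ∑ i, v i ⊗ₜ[L0 μ] w i ∧ g = ∑ i, pn μ (v i) * pn μ (w i)}

/-- The set whose supremum defines the injective pointwise norm: all values
`|∑_{i=1}^n ω(v_i) η(w_i)|` over representations `α = ∑_{i=1}^n v_i ⊗ w_i` and elements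
`ω ∈ 𝔻_{ℳ*}`, `η ∈ 𝔻_{𝒩*}`. -/
def epsReps (α : M ⊗[L0 μ] N) : Set (L0 μ) :=
  {g | ∃ (n : ℕ) (v : Fin n → M) (w : Fin n → N)
    (ω : M →ₗ[L0 μ] L0 μ) (η : N →ₗ[L0 μ] L0 μ), InDualDisc μ ω ∧ InDualDisc μ η ∧
    α = ∑ i, v i ⊗ₜ[L0 μ] w i ∧ g = |∑ i, ω (v i) * η (w i)|}

/-- `IsPiTensor μ M N P e` states that the Banach `L⁰(𝕏)`-module `P`, together with the
`L⁰(𝕏)`-linear map `e` defined on the algebraic tensor product, realizes the projective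
tensor product `ℳ ⊗̂_π 𝒩`: the pointwise norm of `e α` is the projective pointwise norm
`|α|_π` and the image of `e` is dense. -/
structure IsPiTensor (M N P : Type*) [AddCommGroup M] [Module (L0 μ) M] [BanachMod μ M]
    [AddCommGroup N] [Module (L0 μ) N] [BanachMod μ N]
    [AddCommGroup P] [Module (L0 μ) P] [BanachMod μ P]
    (e : M ⊗[L0 μ] N →ₗ[L0 μ] P) : Prop where
  pn_emb : ∀ α : M ⊗[L0 μ] N, IsGLB (piReps μ α) (pn μ (e α))
  dense : ∀ p : P, ∀ ε : ℝ, 0 < ε → ∃ α : M ⊗[L0 μ] N, dM μ (e α) p < ε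

/-- `IsEpsTensor μ M N P e` states that the Banach `L⁰(𝕏)`-module `P`, together with the
`L⁰(𝕏)`-linear map `e` defined on the algebraic tensor product, realizes the injective
tensor product `ℳ ⊗̂_ε 𝒩`: the pointwise norm of `e α` is the injective pointwise norm
`|α|_ε` and the image of `e` is dense. -/
structure IsEpsTensor (M N P : Type*) [AddCommGroup M] [Module (L0 μ) M] [BanachMod μ M]
    [AddCommGroup N] [Module (L0 μ) N] [BanachMod μ N]
    [AddCommGroup P] [Module (L0 μ) P] [BanachMod μ P]
    (e : M ⊗[L0 μ] N →ₗ[L0 μ] P) : Prop where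
  pn_emb : ∀ α : M ⊗[L0 μ] N, IsLUB (epsReps μ α) (pn μ (e α))
  dense : ∀ p : P, ∀ ε : ℝ, 0 < ε → ∃ α : M ⊗[L0 μ] N, dM μ (e α) p < ε

end Defs

/-! ### Regular `f`-rings -/

/-- A commutative von Neumann regular `f`-ring, the algebraic structure of `L⁰`. The `f`-ring axiom
is encoded as multiplicativity of the absolute value, regularity as existence of quasi-inverses. -/
class IsRegularFRing (R : Type*) [CommRing R] [Lattice R] : Prop extends IsOrderedRing R where
  protected abs_mul (a b : R) : |a * b| = |a| * |b|
  exists_mul_mul_self (a : R) : ∃ b, a * b * a = a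

section RegularFRing

lemma eq_zero_of_abs_nonpos {G : Type*} [AddCommGroup G] [Lattice G] [IsOrderedAddMonoid G]
    {a : G} (h : |a| ≤ 0) : a = 0 :=
  le_antisymm ((le_abs_self a).trans h) (neg_nonpos.1 ((neg_le_abs a).trans h))

variable {R : Type*} [CommRing R] [Lattice R] [IsRegularFRing R]

lemma exists_nonneg_mul_eq_one {a : R} (ha : 1 ≤ a) : ∃ b, 0 ≤ b ∧ b * a = 1 := by
  obtain ⟨b, hb⟩ := IsRegularFRing.exists_mul_mul_self a
  have ha_abs : |a| = a := abs_of_nonneg (zero_le_one.trans ha)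
  have hab : 1 - a * b = 0 := by
    refine eq_zero_of_abs_nonpos ?_
    calc |1 - a * b| ≤ |1 - a * b| * a := le_mul_of_one_le_right (abs_nonneg _) ha
      _ = |(1 - a * b) * a| := by rw [IsRegularFRing.abs_mul, ha_abs]
      _ = 0 := by rw [sub_mul, one_mul, hb, sub_self, abs_zero]
  refine ⟨|b|, abs_nonneg b, ?_⟩
  calc |b| * a = |b * a| := by rw [IsRegularFRing.abs_mul, ha_abs]
    _ = 1 := by rw [mul_comm, ← sub_eq_zero.1 hab, abs_of_nonneg zero_le_one]

-- Adding `s` to `b ≤ a * s` replaces `a` by the invertible element `1 + a`.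
lemma isGLB_image_mul_left {S : Set R} {a i : R} (ha : 0 ≤ a) (hi : IsGLB S i) :
    IsGLB ((a * ·) '' S) (a * i) := by
  refine ⟨forall_mem_image.2 fun s hs => mul_le_mul_of_nonneg_left (hi.1 hs) ha, fun b hb => ?_⟩
  obtain ⟨c, hc, hc_inv⟩ := exists_nonneg_mul_eq_one (le_add_of_nonneg_right ha : 1 ≤ 1 + a)
  have h_lower : c * (b + i) ≤ i := hi.2 fun s hs =>
    calc c * (b + i) ≤ c * (a * s + s) :=
          mul_le_mul_of_nonneg_left (add_le_add (hb (mem_image_of_mem _ hs)) (hi.1 hs)) hc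
      _ = s := by linear_combination s * hc_inv
  have h_sum : b + i ≤ a * i + i :=
    calc b + i = (1 + a) * (c * (b + i)) := by linear_combination -(b + i) * hc_inv
      _ ≤ (1 + a) * i := mul_le_mul_of_nonneg_left h_lower (add_nonneg zero_le_one ha)
      _ = a * i + i := by ring
  exact le_of_add_le_add_right h_sum

lemma isLUB_image_mul_left {S : Set R} {a u : R} (ha : 0 ≤ a) (hu : IsLUB S u) :
    IsLUB ((a * ·) '' S) (a * u) := by
  have h := (isGLB_image_mul_left ha hu.neg).neg
  simpa only [← image_neg_eq_neg, image_image, mul_neg, neg_neg] using h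

end RegularFRing

/-! ### Sublinear maps and the Hahn–Banach theorem -/

/-- Sublinearity of a map into an ordered ring: subadditivity and positive homogeneity. Of the
latter only one inequality is required, see `IsSublinear.map_smul`. -/
structure IsSublinear {R M : Type*} [CommRing R] [Lattice R] [AddCommGroup M] [Module R M]
    (q : M → R) : Prop where
  add_le (v w : M) : q (v + w) ≤ q v + q w
  smul_le {a : R} (ha : 0 ≤ a) (v : M) : q (a • v) ≤ a * q v

namespace IsSublinear

variable {R M : Type*} [CommRing R] [AddCommGroup M] [Module R M]

section Lattice

variable [Lattice R] [IsRegularFRing R] {q : M → R}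

lemma map_zero (hq : IsSublinear q) : q 0 = 0 :=
  le_antisymm (by simpa using hq.smul_le le_rfl 0) (by simpa using hq.add_le 0 0)

lemma neg_le (hq : IsSublinear q) (v : M) : -q (-v) ≤ q v := by
  simpa [hq.map_zero, neg_le_iff_add_nonneg] using hq.add_le v (-v)

lemma map_smul (hq : IsSublinear q) {a : R} (ha : 0 ≤ a) (v : M) : q (a • v) = a * q v := by
  refine le_antisymm (hq.smul_le ha v) ?_
  have h1a : 0 ≤ 1 + a := add_nonneg zero_le_one ha
  obtain ⟨c, hc, hc_inv⟩ := exists_nonneg_mul_eq_one (le_add_of_nonneg_right ha : 1 ≤ 1 + a)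
  have h_sum : q v + a * q v ≤ q v + q (a • v) :=
    calc q v + a * q v = (1 + a) * q (c • (1 + a) • v) := by
          rw [smul_smul, hc_inv, one_smul, add_mul, one_mul]
      _ ≤ (1 + a) * (c * q ((1 + a) • v)) := mul_le_mul_of_nonneg_left (hq.smul_le hc _) h1a
      _ = q (v + a • v) := by
          rw [← mul_assoc, mul_comm (1 + a), hc_inv, one_mul, add_smul, one_smul]
      _ ≤ q v + q (a • v) := hq.add_le _ _
  exact le_of_add_le_add_left h_sum

lemma of_isGLB {ι : Type*} {F : ι → M → R} (hq : ∀ v, IsGLB (range (F · v)) (q v))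
    (h_add : ∀ i j v w, ∃ k, F k (v + w) ≤ F i v + F j w)
    (h_smul : ∀ (i) (a : R) (v), 0 ≤ a → ∃ k, F k (a • v) ≤ a * F i v) : IsSublinear q where
  add_le v w := by
    refine ((hq v).add (hq w)).2 ?_
    rintro _ ⟨_, ⟨i, rfl⟩, _, ⟨j, rfl⟩, rfl⟩
    obtain ⟨k, hk⟩ := h_add i j v w
    exact ((hq _).1 ⟨k, rfl⟩).trans hk
  smul_le {a} ha v := by
    refine (isGLB_image_mul_left ha (hq v)).2 ?_
    rintro _ ⟨_, ⟨i, rfl⟩, rfl⟩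
    obtain ⟨k, hk⟩ := h_smul i a v ha
    exact ((hq _).1 ⟨k, rfl⟩).trans hk

end Lattice

variable [ConditionallyCompleteLattice R]

/-- The lowering of `q` in direction `x`: for sublinear `q` it is the largest sublinear map below
`q` whose value at `-x` is at most `-q x`. -/
def lower (q : M → R) (x v : M) : R :=
  ⨅ a : Ici (0 : R), (q (v + a.1 • x) - a.1 * q x)

variable [IsRegularFRing R] {q : M → R}

lemma isGLB_lower (hq : IsSublinear q) (x v : M) :
    IsGLB (range fun a : Ici (0 : R) => q (v + a.1 • x) - a.1 * q x) (lower q x v) := by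
  refine isGLB_ciInf ⟨-q (-v), forall_mem_range.2 fun ⟨a, ha⟩ => ?_⟩
  have h := hq.add_le (v + a • x) (-v)
  rw [add_neg_cancel_comm, hq.map_smul ha] at h
  rwa [le_sub_iff_add_le, neg_add_le_iff_le_add, add_comm]

lemma lower_le (hq : IsSublinear q) (x v : M) {a : R} (ha : 0 ≤ a) :
    lower q x v ≤ q (v + a • x) - a * q x :=
  (hq.isGLB_lower x v).1 ⟨⟨a, ha⟩, rfl⟩

lemma lower_le_self (hq : IsSublinear q) (x : M) : lower q x ≤ q := fun v => by
  simpa using hq.lower_le x v le_rfl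

lemma isSublinear_lower (hq : IsSublinear q) (x : M) : IsSublinear (lower q x) := by
  refine of_isGLB (hq.isGLB_lower x) ?_ ?_
  · rintro ⟨a, ha⟩ ⟨b, hb⟩ v w
    refine ⟨⟨a + b, add_nonneg ha hb⟩, ?_⟩
    calc q (v + w + (a + b) • x) - (a + b) * q x
        = q ((v + a • x) + (w + b • x)) - (a + b) * q x := by rw [add_smul, add_add_add_comm]
      _ ≤ q (v + a • x) + q (w + b • x) - (a + b) * q x := sub_le_sub_right (hq.add_le _ _) _
      _ = _ := by ring
  · rintro ⟨a, ha⟩ b v hb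
    refine ⟨⟨b * a, mul_nonneg hb ha⟩, le_of_eq ?_⟩
    dsimp only
    rw [mul_smul, ← smul_add, hq.map_smul hb]
    ring

lemma exists_mem_lowerBounds_of_isChain {c : Set (M → R)} (h_chain : IsChain (· ≤ ·) c)
    (hc : ∀ r ∈ c, IsSublinear r) (h_ne : c.Nonempty) :
    ∃ r, IsSublinear r ∧ r ∈ lowerBounds c := by
  obtain ⟨r₀, hr₀⟩ := h_ne
  have : Nonempty c := ⟨⟨r₀, hr₀⟩⟩
  have h_glb (v : M) : IsGLB (range fun r : c => r.1 v) (⨅ r : c, r.1 v) := by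
    refine isGLB_ciInf ⟨-r₀ (-v), forall_mem_range.2 fun ⟨r, hr⟩ => ?_⟩
    rcases h_chain.total hr₀ hr with h | h
    · exact ((hc r₀ hr₀).neg_le v).trans (h v)
    · exact (neg_le_neg (h (-v))).trans ((hc r hr).neg_le v)
  refine ⟨fun v => ⨅ r : c, r.1 v, of_isGLB h_glb ?_ ?_, fun r hr v => (h_glb v).1 ⟨⟨r, hr⟩, rfl⟩⟩
  · rintro ⟨r, hr⟩ ⟨s, hs⟩ v w
    rcases h_chain.total hr hs with h | h
    · exact ⟨⟨r, hr⟩, ((hc r hr).add_le v w).trans (add_le_add_right (h w) _)⟩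
    · exact ⟨⟨s, hs⟩, ((hc s hs).add_le v w).trans (add_le_add_left (h v) _)⟩
  · exact fun ⟨r, hr⟩ a v ha => ⟨⟨r, hr⟩, (hc r hr).smul_le ha v⟩

lemma exists_minimal_le (hq : IsSublinear q) : ∃ r ≤ q, Minimal IsSublinear r := by
  obtain ⟨r, hrq, hr⟩ := zorn_le_nonempty₀ (α := (M → R)ᵒᵈ) {r | IsSublinear (OrderDual.ofDual r)}
    (fun c hc h_chain r₀ hr₀ =>
      exists_mem_lowerBounds_of_isChain h_chain.symm hc ⟨r₀, hr₀⟩) (OrderDual.toDual q) hq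
  exact ⟨r, hrq, hr.prop, fun s hs hsr => hr.le_of_ge hs hsr⟩

-- A minimal sublinear map is not decreased by any of its lowerings.
lemma map_add_of_minimal (hq : Minimal IsSublinear q) (v x : M) : q (v + x) = q v + q x := by
  refine le_antisymm (hq.prop.add_le v x) (le_sub_iff_add_le.1 ?_)
  calc q v ≤ lower q x v := hq.le_of_le (hq.prop.isSublinear_lower x) (hq.prop.lower_le_self x) v
    _ ≤ q (v + (1 : R) • x) - 1 * q x := hq.prop.lower_le x v zero_le_one
    _ = q (v + x) - q x := by rw [one_smul, one_mul]

lemma exists_linearMap_eq_of_minimal (hq : Minimal IsSublinear q) :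
    ∃ ω : M →ₗ[R] R, ⇑ω = q := by
  let ω : M →+ R := AddMonoidHom.mk' q (map_add_of_minimal hq)
  refine ⟨⟨ω, fun a v => ?_⟩, rfl⟩
  calc ω (a • v) = ω (a⁺ • v - a⁻ • v) := by rw [← sub_smul, posPart_sub_negPart]
    _ = q (a⁺ • v) - q (a⁻ • v) := map_sub ω _ _
    _ = (a⁺ - a⁻) * q v := by
        rw [hq.prop.map_smul (posPart_nonneg a), hq.prop.map_smul (negPart_nonneg a), sub_mul]
    _ = a * q v := by rw [posPart_sub_negPart]

theorem exists_linearMap_le_apply_eq (hq : IsSublinear q) (x : M) :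
    ∃ ω : M →ₗ[R] R, (∀ v, ω v ≤ q v) ∧ ω x = q x := by
  obtain ⟨r, hr_le, hr_min⟩ := (hq.isSublinear_lower x).exists_minimal_le
  obtain ⟨ω, rfl⟩ := exists_linearMap_eq_of_minimal hr_min
  have hω : ∀ v, ω v ≤ q v := fun v => (hr_le v).trans (hq.lower_le_self x v)
  refine ⟨ω, hω, le_antisymm (hω x) (neg_le_neg_iff.1 ?_)⟩
  calc -ω x = ω (-x) := (_root_.map_neg ω x).symm
    _ ≤ q (-x + (1 : R) • x) - 1 * q x := (hr_le _).trans (hq.lower_le x _ zero_le_one)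
    _ = -q x := by rw [one_smul, neg_add_cancel, hq.map_zero, one_mul, zero_sub]

end IsSublinear

/-! ### Pointwise norms and dual discs -/

/-- A pointwise norm on a module over a lattice-ordered ring, without any completeness. -/
structure IsPointwiseNorm {R M : Type*} [CommRing R] [Lattice R] [AddCommGroup M] [Module R M]
    (p : M → R) : Prop where
  nonneg (v : M) : 0 ≤ p v
  eq_zero_iff (v : M) : p v = 0 ↔ v = 0
  add_le (v w : M) : p (v + w) ≤ p v + p w
  smul (a : R) (v : M) : p (a • v) = |a| * p v

/-- The unit disc of the dual of a module with pointwise norm `p`. -/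
def dualDisc {R M : Type*} [CommRing R] [Lattice R] [AddCommGroup M] [Module R M]
    (p : M → R) : Set (Module.Dual R M) :=
  {ω | ∀ v, |ω v| ≤ p v}

namespace IsPointwiseNorm

variable {R M : Type*} [CommRing R] [AddCommGroup M] [Module R M]

section Lattice

variable [Lattice R] [IsRegularFRing R] {p : M → R}

lemma isSublinear (hp : IsPointwiseNorm p) : IsSublinear p :=
  ⟨hp.add_le, fun ha v => by rw [hp.smul, abs_of_nonneg ha]⟩

lemma map_neg (hp : IsPointwiseNorm p) (v : M) : p (-v) = p v := by
  rw [← neg_one_smul R, hp.smul, abs_neg, abs_of_nonneg zero_le_one, one_mul]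

lemma exists_mul_smul_self (hp : IsPointwiseNorm p) (v : M) : ∃ a : R, (a * p v) • v = v := by
  obtain ⟨a, ha⟩ := IsRegularFRing.exists_mul_mul_self (p v)
  refine ⟨a, sub_eq_zero.1 ((hp.eq_zero_iff _).1 ?_)⟩
  calc p ((a * p v) • v - v) = |a * p v - 1| * |p v| := by
        rw [abs_of_nonneg (hp.nonneg v), ← hp.smul, sub_smul, one_smul]
    _ = |p v * a * p v - p v| := by rw [← IsRegularFRing.abs_mul]; ring_nf
    _ = 0 := by rw [ha, sub_self, abs_zero]

end Lattice

lemma exists_mem_dualDisc_apply_eq [ConditionallyCompleteLattice R] [IsRegularFRing R] {p : M → R}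
    (hp : IsPointwiseNorm p) (x : M) : ∃ ω ∈ dualDisc p, ω x = p x := by
  obtain ⟨ω, hω, hωx⟩ := hp.isSublinear.exists_linearMap_le_apply_eq x
  refine ⟨ω, fun v => abs_le'.2 ⟨hω v, ?_⟩, hωx⟩
  rw [← _root_.map_neg, ← hp.map_neg]
  exact hω (-v)

end IsPointwiseNorm

/-! ### The injective pointwise norm -/

-- Replacing `vᵢ` by `vᵢ - ω(vᵢ) v₀` in `α = ∑ vᵢ ⊗ wᵢ` subtracts `0` from `α`, as `(ω ⊗ id) α = 0`,
-- and kills the term `i = 0`, as `ω(v₀) v₀ = v₀`.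
lemma tensor_eq_zero_of_rTensor_eq_zero {R M N : Type*} [CommRing R] [AddCommGroup M] [Module R M]
    [AddCommGroup N] [Module R N] {α : M ⊗[R] N}
    (h : ∀ x : M, ∃ ω : Module.Dual R M, ω x • x = x ∧ ω.rTensor N α = 0) : α = 0 := by
  obtain ⟨n, v, w, hα⟩ := TensorProduct.exists_sum_tmul_eq α
  induction n with
  | zero => simpa using hα
  | succ n ih =>
    obtain ⟨ω, hω, hωα⟩ := h (v 0)
    let P : M →ₗ[R] M := LinearMap.toSpanSingleton R M (v 0) ∘ₗ ω
    have hP : P.rTensor N α = 0 := by rw [LinearMap.rTensor_comp_apply, hωα, map_zero]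
    refine ih (fun i => v i.succ - P (v i.succ)) (fun i => w i.succ) ?_
    calc α = (LinearMap.id - P).rTensor N α := by simp [LinearMap.rTensor_sub, hP]
      _ = ∑ i, (v i - P (v i)) ⊗ₜ w i := by simp [hα, TensorProduct.sub_tmul]
      _ = ∑ i : Fin n, (v i.succ - P (v i.succ)) ⊗ₜ w i.succ := by
          simp [Fin.sum_univ_succ, P, hω]

section InjectiveNorm

variable {R M N : Type*} [CommRing R] [AddCommGroup M] [Module R M] [AddCommGroup N] [Module R N]

lemma dualDistrib_tmul_eq_apply_rTensor (ω : Module.Dual R M) (η : Module.Dual R N)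
    (α : M ⊗[R] N) :
    dualDistrib R M N (ω ⊗ₜ η) α = η (TensorProduct.lid R N (ω.rTensor N α)) := by
  induction α with
  | zero => simp
  | tmul v w => simp
  | add α β hα hβ => simp only [map_add, hα, hβ]

/-- The values `|(ω ⊗ η) α|` for `ω`, `η` in the dual discs, whose supremum is the injective
pointwise norm of `α`. -/
def injectiveValues [Lattice R] (p : M → R) (q : N → R) (α : M ⊗[R] N) : Set R :=
  image2 (fun ω η => |dualDistrib R M N (ω ⊗ₜ η) α|) (dualDisc p) (dualDisc q)

/-- The injective pointwise norm on `M ⊗ N` induced by pointwise norms `p` on `M` and `q` on `N`. -/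
def injectiveNorm [ConditionallyCompleteLattice R] (p : M → R) (q : N → R) (α : M ⊗[R] N) : R :=
  sSup (injectiveValues p q α)

section Lattice

variable [Lattice R] [IsRegularFRing R] {p : M → R} {q : N → R}

lemma injectiveValues_nonempty (hp : IsPointwiseNorm p) (hq : IsPointwiseNorm q) (α : M ⊗[R] N) :
    (injectiveValues p q α).Nonempty :=
  .image2 ⟨0, fun v => by simpa using hp.nonneg v⟩ ⟨0, fun w => by simpa using hq.nonneg w⟩

lemma abs_dualDistrib_tmul_le (hp : IsPointwiseNorm p) {ω : Module.Dual R M}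
    {η : Module.Dual R N} (hω : ω ∈ dualDisc p) (hη : η ∈ dualDisc q) (v : M) (w : N) :
    |dualDistrib R M N (ω ⊗ₜ η) (v ⊗ₜ w)| ≤ p v * q w := by
  rw [dualDistrib_apply, IsRegularFRing.abs_mul]
  exact mul_le_mul (hω v) (hη w) (abs_nonneg _) (hp.nonneg v)

lemma injectiveValues_bddAbove (hp : IsPointwiseNorm p) (α : M ⊗[R] N) :
    BddAbove (injectiveValues p q α) := by
  simp only [bddAbove_def, injectiveValues, forall_mem_image2]
  induction α with
  | zero => exact ⟨0, fun ω _ η _ => by simp⟩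
  | tmul v w => exact ⟨p v * q w, fun ω hω η hη => abs_dualDistrib_tmul_le hp hω hη v w⟩
  | add α β hα hβ =>
    obtain ⟨a, ha⟩ := hα
    obtain ⟨b, hb⟩ := hβ
    refine ⟨a + b, fun ω hω η hη => ?_⟩
    rw [map_add]
    exact (abs_add_le _ _).trans (add_le_add (ha ω hω η hη) (hb ω hω η hη))

lemma injectiveValues_smul (a : R) (α : M ⊗[R] N) :
    injectiveValues p q (a • α) = (|a| * ·) '' injectiveValues p q α := by
  simp only [injectiveValues, image_image2, map_smul, smul_eq_mul, IsRegularFRing.abs_mul]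

end Lattice

variable [ConditionallyCompleteLattice R] [IsRegularFRing R] {p : M → R} {q : N → R}

lemma isLUB_injectiveNorm (hp : IsPointwiseNorm p) (hq : IsPointwiseNorm q) (α : M ⊗[R] N) :
    IsLUB (injectiveValues p q α) (injectiveNorm p q α) :=
  isLUB_csSup (injectiveValues_nonempty hp hq α) (injectiveValues_bddAbove hp α)

lemma abs_dualDistrib_le_injectiveNorm (hp : IsPointwiseNorm p) {ω : Module.Dual R M}
    {η : Module.Dual R N} (hω : ω ∈ dualDisc p) (hη : η ∈ dualDisc q) (α : M ⊗[R] N) :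
    |dualDistrib R M N (ω ⊗ₜ η) α| ≤ injectiveNorm p q α :=
  le_csSup (injectiveValues_bddAbove hp α) (mem_image2_of_mem hω hη)

lemma injectiveNorm_le (hp : IsPointwiseNorm p) (hq : IsPointwiseNorm q) {α : M ⊗[R] N} {b : R}
    (h : ∀ ω ∈ dualDisc p, ∀ η ∈ dualDisc q, |dualDistrib R M N (ω ⊗ₜ η) α| ≤ b) :
    injectiveNorm p q α ≤ b :=
  csSup_le (injectiveValues_nonempty hp hq α) (forall_mem_image2.2 h)

lemma injectiveNorm_nonneg (hp : IsPointwiseNorm p) (hq : IsPointwiseNorm q) (α : M ⊗[R] N) :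
    0 ≤ injectiveNorm p q α := by
  obtain ⟨_, ω, hω, η, hη, rfl⟩ := injectiveValues_nonempty hp hq α
  exact (abs_nonneg _).trans (abs_dualDistrib_le_injectiveNorm hp hω hη α)

lemma tensor_eq_zero_of_dualDistrib_eq_zero (hp : IsPointwiseNorm p) (hq : IsPointwiseNorm q)
    {α : M ⊗[R] N}
    (h : ∀ ω ∈ dualDisc p, ∀ η ∈ dualDisc q, dualDistrib R M N (ω ⊗ₜ η) α = 0) : α = 0 := by
  have h_rTensor : ∀ ω ∈ dualDisc p, ω.rTensor N α = 0 := fun ω hω => by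
    obtain ⟨η, hη, hη_norm⟩ :=
      hq.exists_mem_dualDisc_apply_eq (TensorProduct.lid R N (ω.rTensor N α))
    rwa [← dualDistrib_tmul_eq_apply_rTensor, h ω hω η hη, eq_comm, hq.eq_zero_iff,
      LinearEquiv.map_eq_zero_iff] at hη_norm
  refine tensor_eq_zero_of_rTensor_eq_zero fun x => ?_
  obtain ⟨ω, hω, hωx⟩ := hp.exists_mem_dualDisc_apply_eq x
  obtain ⟨a, ha⟩ := hp.exists_mul_smul_self x
  refine ⟨a • ω, ?_, ?_⟩
  · rwa [LinearMap.smul_apply, smul_eq_mul, hωx]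
  · rw [LinearMap.rTensor_smul, LinearMap.smul_apply, h_rTensor ω hω, smul_zero]

lemma injectiveNorm_eq_zero_iff (hp : IsPointwiseNorm p) (hq : IsPointwiseNorm q) (α : M ⊗[R] N) :
    injectiveNorm p q α = 0 ↔ α = 0 := by
  refine ⟨fun h => tensor_eq_zero_of_dualDistrib_eq_zero hp hq fun ω hω η hη => ?_, ?_⟩
  · exact eq_zero_of_abs_nonpos (h ▸ abs_dualDistrib_le_injectiveNorm hp hω hη α)
  · rintro rfl
    exact le_antisymm (injectiveNorm_le hp hq (by simp)) (injectiveNorm_nonneg hp hq 0)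

lemma injectiveNorm_add_le (hp : IsPointwiseNorm p) (hq : IsPointwiseNorm q) (α β : M ⊗[R] N) :
    injectiveNorm p q (α + β) ≤ injectiveNorm p q α + injectiveNorm p q β := by
  refine injectiveNorm_le hp hq fun ω hω η hη => ?_
  rw [map_add]
  exact (abs_add_le _ _).trans (add_le_add (abs_dualDistrib_le_injectiveNorm hp hω hη α)
    (abs_dualDistrib_le_injectiveNorm hp hω hη β))

lemma injectiveNorm_smul (hp : IsPointwiseNorm p) (hq : IsPointwiseNorm q) (a : R)
    (α : M ⊗[R] N) : injectiveNorm p q (a • α) = |a| * injectiveNorm p q α := by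
  refine (isLUB_injectiveNorm hp hq (a • α)).unique ?_
  rw [injectiveValues_smul]
  exact isLUB_image_mul_left (abs_nonneg a) (isLUB_injectiveNorm hp hq α)

lemma injectiveNorm_tmul (hp : IsPointwiseNorm p) (hq : IsPointwiseNorm q) (v : M) (w : N) :
    injectiveNorm p q (v ⊗ₜ w) = p v * q w := by
  refine le_antisymm
    (injectiveNorm_le hp hq fun ω hω η hη => abs_dualDistrib_tmul_le hp hω hη v w) ?_
  obtain ⟨ω, hω, hωv⟩ := hp.exists_mem_dualDisc_apply_eq v
  obtain ⟨η, hη, hηw⟩ := hq.exists_mem_dualDisc_apply_eq w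
  calc p v * q w = dualDistrib R M N (ω ⊗ₜ η) (v ⊗ₜ w) := by rw [dualDistrib_apply, hωv, hηw]
    _ ≤ |dualDistrib R M N (ω ⊗ₜ η) (v ⊗ₜ w)| := le_abs_self _
    _ ≤ injectiveNorm p q (v ⊗ₜ w) := abs_dualDistrib_le_injectiveNorm hp hω hη _

theorem injective_pointwise_norm_general (hp : IsPointwiseNorm p) (hq : IsPointwiseNorm q) :
    (∀ α, IsLUB (injectiveValues p q α) (injectiveNorm p q α)) ∧
      IsPointwiseNorm (injectiveNorm p q) ∧
      ∀ v w, injectiveNorm p q (v ⊗ₜ w) = p v * q w :=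
  ⟨isLUB_injectiveNorm hp hq,
    ⟨injectiveNorm_nonneg hp hq, injectiveNorm_eq_zero_iff hp hq, injectiveNorm_add_le hp hq,
      injectiveNorm_smul hp hq⟩,
    injectiveNorm_tmul hp hq⟩

end InjectiveNorm

/-! ### `L⁰` as a Dedekind complete regular `f`-ring -/

lemma ae_le_of_withDensity_le {ν : Measure X} [SigmaFinite ν] {f g : X → ENNReal}
    (hf : AEMeasurable f ν) (h : ν.withDensity f ≤ ν.withDensity g) : f ≤ᵐ[ν] g := by
  refine ae_le_of_forall_setLIntegral_le_of_sigmaFinite₀ hf fun s hs _ => ?_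
  rw [← withDensity_apply _ hs, ← withDensity_apply _ hs]
  exact h s

/-- The density of the supremum, in the complete lattice of measures, of the measures with
densities `f i` is the essential supremum of the family. -/
lemma exists_measurable_ae_isLUB {ν : Measure X} [SigmaFinite ν] {ι : Type*} {f : ι → X → ENNReal}
    (hf : ∀ i, AEMeasurable (f i) ν) {u : X → ENNReal} (hu : ∀ᵐ x ∂ν, u x ≠ ⊤)
    (hfu : ∀ i, f i ≤ᵐ[ν] u) :
    ∃ g, Measurable g ∧ (∀ i, f i ≤ᵐ[ν] g) ∧ ∀ h, (∀ i, f i ≤ᵐ[ν] h) → g ≤ᵐ[ν] h := by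
  let m : Measure X := ⨆ i, ν.withDensity (f i)
  have hm_le : ∀ h, (∀ i, f i ≤ᵐ[ν] h) → m ≤ ν.withDensity h := fun h hh =>
    iSup_le fun i => withDensity_mono (hh i)
  have : SigmaFinite (ν.withDensity u) := SigmaFinite.withDensity_of_ne_top hu
  have : SigmaFinite m := Measure.sigmaFinite_of_le _ (hm_le u hfu)
  have hm_ac : m ≪ ν :=
    (hm_le u hfu).absolutelyContinuous.trans (withDensity_absolutelyContinuous ν u)
  have hm_density : ν.withDensity (m.rnDeriv ν) = m := Measure.withDensity_rnDeriv_eq m ν hm_ac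
  have hm_meas : Measurable (m.rnDeriv ν) := Measure.measurable_rnDeriv m ν
  refine ⟨m.rnDeriv ν, hm_meas, fun i => ?_, fun h hh => ?_⟩
  · refine ae_le_of_withDensity_le (hf i) ?_
    rw [hm_density]
    exact le_iSup (fun i => ν.withDensity (f i)) i
  · refine ae_le_of_withDensity_le hm_meas.aemeasurable ?_
    rw [hm_density]
    exact hm_le h hh

namespace L0

variable {μ : Measure X}

instance : IsOrderedAddMonoid (L0 μ) where
  add_le_add_left f g hfg h := by
    rw [← AEEqFun.coeFn_le] at hfg ⊢
    filter_upwards [hfg, AEEqFun.coeFn_add f h, AEEqFun.coeFn_add g h] with x hx hf hg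
    rw [hf, hg]
    exact add_le_add_left hx (h x)

instance : ZeroLEOneClass (L0 μ) where
  zero_le_one := by
    rw [← AEEqFun.coeFn_le]
    filter_upwards [AEEqFun.coeFn_zero (α := X) (β := ℝ) (μ := μ),
      AEEqFun.coeFn_one (α := X) (β := ℝ) (μ := μ)] with x h₀ h₁
    rw [h₀, h₁]
    exact zero_le_one

lemma mul_nonneg {f g : L0 μ} (hf : 0 ≤ f) (hg : 0 ≤ g) : 0 ≤ f * g := by
  rw [← AEEqFun.coeFn_le] at hf hg ⊢
  filter_upwards [hf, hg, AEEqFun.coeFn_mul f g, AEEqFun.coeFn_zero (α := X) (β := ℝ) (μ := μ)]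
    with x hfx hgx h_mul h₀
  rw [h₀] at hfx hgx ⊢
  rw [h_mul]
  exact _root_.mul_nonneg hfx hgx

instance : IsRegularFRing (L0 μ) where
  __ := IsOrderedRing.of_mul_nonneg fun _ _ => mul_nonneg
  abs_mul f g := by
    refine AEEqFun.ext ?_
    filter_upwards [AEEqFun.coeFn_abs (f * g), AEEqFun.coeFn_abs f, AEEqFun.coeFn_abs g,
      AEEqFun.coeFn_mul f g, AEEqFun.coeFn_mul |f| |g|] with x h_abs hf hg h_mul h_mul_abs
    rw [h_abs, h_mul, h_mul_abs, Pi.mul_apply, Pi.mul_apply, hf, hg, _root_.abs_mul]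
  exists_mul_mul_self f := by
    let g : L0 μ := AEEqFun.compMeasurable (·⁻¹) measurable_inv f
    refine ⟨g, AEEqFun.ext ?_⟩
    filter_upwards [AEEqFun.coeFn_compMeasurable (·⁻¹) measurable_inv f, AEEqFun.coeFn_mul f g,
      AEEqFun.coeFn_mul (f * g) f] with x hg hfg hfgf
    rw [hfgf, Pi.mul_apply, hfg, Pi.mul_apply, hg]
    exact mul_inv_mul_cancel (f x)

-- `μ` is replaced by the equivalent finite measure `μ.toFinite`, and `S` by the family of
-- nonnegative functions `(s - s₀)⁺` for some `s₀ ∈ S`.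
lemma exists_isLUB [SFinite μ] {S : Set (L0 μ)} (hS : S.Nonempty) (hb : BddAbove S) :
    ∃ b, IsLUB S b := by
  obtain ⟨s₀, hs₀⟩ := hS
  obtain ⟨u, hu⟩ := hb
  let excess (s : L0 μ) (x : X) : ENNReal := ENNReal.ofReal (s x - s₀ x)
  have h_meas (s : L0 μ) : AEMeasurable (excess s) μ.toFinite :=
    (s.aemeasurable.sub s₀.aemeasurable).ennreal_ofReal.mono_ac (toFinite_absolutelyContinuous μ)
  have h_mono {s t : L0 μ} (hst : s ≤ t) : excess s ≤ᵐ[μ] excess t := by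
    filter_upwards [AEEqFun.coeFn_le.2 hst] with x hx
    exact ENNReal.ofReal_le_ofReal (sub_le_sub_right hx _)
  obtain ⟨g, hg_meas, hg_upper, hg_least⟩ :=
    exists_measurable_ae_isLUB (fun s : S => h_meas s) (u := excess u)
      (.of_forall fun _ => ENNReal.ofReal_ne_top)
      (fun s => by rw [ae_toFinite]; exact h_mono (hu s.2))
  simp only [ae_toFinite] at hg_upper hg_least
  have hg_finite : ∀ᵐ x ∂μ, g x ≠ ⊤ := by
    filter_upwards [hg_least _ fun s => h_mono (hu s.2)] with x hx
    exact (hx.trans_lt ENNReal.ofReal_lt_top).ne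
  let d : L0 μ := AEEqFun.mk (fun x => (g x).toReal) hg_meas.ennreal_toReal.aestronglyMeasurable
  have hd : ⇑(s₀ + d) =ᵐ[μ] fun x => s₀ x + (g x).toReal :=
    (AEEqFun.coeFn_add s₀ d).trans (EventuallyEq.rfl.add (AEEqFun.coeFn_mk _ _))
  refine ⟨s₀ + d, fun s hs => AEEqFun.coeFn_le.1 ?_, fun h hh => AEEqFun.coeFn_le.1 ?_⟩
  · filter_upwards [hg_upper ⟨s, hs⟩, hg_finite, hd] with x hx hx_finite hdx
    have := (ENNReal.ofReal_le_iff_le_toReal hx_finite).1 hx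
    linarith
  · filter_upwards [hg_least _ fun s => h_mono (hh s.2), AEEqFun.coeFn_le.2 (hh hs₀), hd]
      with x hx hx₀ hdx
    have := ENNReal.toReal_le_of_le_ofReal (sub_nonneg.2 hx₀) hx
    linarith

lemma exists_isGLB [SFinite μ] {S : Set (L0 μ)} (hS : S.Nonempty) (hb : BddBelow S) :
    ∃ b, IsGLB S b := by
  obtain ⟨b, h⟩ := exists_isLUB hS.neg hb.neg
  exact ⟨-b, by simpa using h.neg⟩

open Classical in
instance [SFinite μ] : ConditionallyCompleteLattice (L0 μ) where
  __ := (inferInstance : Lattice (L0 μ))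
  sSup S := if h : ∃ b, IsLUB S b then h.choose else 0
  sInf S := if h : ∃ b, IsGLB S b then h.choose else 0
  isLUB_csSup S hS hb := by
    have h := exists_isLUB hS hb
    rw [dif_pos h]
    exact h.choose_spec
  isGLB_csInf S hS hb := by
    have h := exists_isGLB hS hb
    rw [dif_pos h]
    exact h.choose_spec

end L0

/-! ### Banach `L⁰`-modules -/

section BanachModule

variable (μ : Measure X) [SFinite μ] {M N : Type*} [AddCommGroup M] [Module (L0 μ) M]
  [BanachMod μ M] [AddCommGroup N] [Module (L0 μ) N] [BanachMod μ N]

lemma isPointwiseNorm_pn : IsPointwiseNorm (pn μ : M → L0 μ) :=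
  ⟨BanachMod.pn_nonneg, BanachMod.pn_eq_zero, BanachMod.pn_add_le, BanachMod.pn_smul⟩

lemma epsReps_eq_injectiveValues (α : M ⊗[L0 μ] N) :
    epsReps μ α = injectiveValues (pn μ) (pn μ) α := by
  ext g
  constructor
  · rintro ⟨n, v, w, ω, η, hω, hη, rfl, rfl⟩
    exact ⟨ω, hω, η, hη, by simp only [map_sum, dualDistrib_apply]⟩
  · rintro ⟨ω, hω, η, hη, rfl⟩
    obtain ⟨n, v, w, rfl⟩ := TensorProduct.exists_sum_tmul_eq α
    exact ⟨n, v, w, ω, η, hω, hη, rfl, by simp only [map_sum, dualDistrib_apply]⟩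

variable {μ} in
lemma isLUB_epsReps_iff {α : M ⊗[L0 μ] N} {b : L0 μ} :
    IsLUB (epsReps μ α) b ↔ b = injectiveNorm (pn μ) (pn μ) α := by
  have h := isLUB_injectiveNorm (isPointwiseNorm_pn μ) (isPointwiseNorm_pn μ) α
  rw [epsReps_eq_injectiveValues]
  exact ⟨fun hb => hb.unique h, fun hb => hb ▸ h⟩

end BanachModule

/-- Let `𝕏` be a σ-finite measure space and `ℳ`, `𝒩` Banach
`L⁰(𝕏)`-modules. The injective pointwise norm `|α|_ε := ⋁ { |∑_{i=1}^n ω(v_i) η(w_i)| :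
α = ∑_{i=1}^n v_i ⊗ w_i, ω ∈ 𝔻_{ℳ*}, η ∈ 𝔻_{𝒩*} }` (the supremum, which exists) is a
pointwise norm on `ℳ ⊗ 𝒩`, and `|v ⊗ w|_ε = |v||w|`. -/
theorem injective_pointwise_norm
    (μ : Measure X) [SigmaFinite μ]
    (M : Type*) [AddCommGroup M] [Module (L0 μ) M] [BanachMod μ M]
    (N : Type*) [AddCommGroup N] [Module (L0 μ) N] [BanachMod μ N]
    :
    -- existence of the supremum
    (∀ α : M ⊗[L0 μ] N, ∃ b : L0 μ, IsLUB (epsReps μ α) b)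
    -- nonnegativity
    ∧ (∀ (α : M ⊗[L0 μ] N) (b : L0 μ), IsLUB (epsReps μ α) b → 0 ≤ b)
    -- `|α|_ε = 0` iff `α = 0`
    ∧ (∀ (α : M ⊗[L0 μ] N) (b : L0 μ), IsLUB (epsReps μ α) b → (b = 0 ↔ α = 0))
    -- subadditivity
    ∧ (∀ (α β : M ⊗[L0 μ] N) (a b c : L0 μ), IsLUB (epsReps μ α) a → IsLUB (epsReps μ β) b →
        IsLUB (epsReps μ (α + β)) c → c ≤ a + b)
    -- homogeneity
    ∧ (∀ (f : L0 μ) (α : M ⊗[L0 μ] N) (a c : L0 μ), IsLUB (epsReps μ α) a →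
        IsLUB (epsReps μ (f • α)) c → c = |f| * a)
    -- value on elementary tensors
    ∧ (∀ (v : M) (w : N) (b : L0 μ), IsLUB (epsReps μ (v ⊗ₜ[L0 μ] w)) b →
        b = pn μ v * pn μ w) := by
  obtain ⟨-, h_norm, h_tmul⟩ := injective_pointwise_norm_general
    (isPointwiseNorm_pn μ (M := M)) (isPointwiseNorm_pn μ (M := N))
  simp only [isLUB_epsReps_iff, exists_eq, forall_eq, forall_eq_apply_imp_iff, implies_true,
    true_and]
  refine ⟨h_norm.nonneg, h_norm.eq_zero_iff, ?_, h_norm.smul, h_tmul⟩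
  rintro α β _ _ _ rfl rfl rfl
  exact h_norm.add_le α β

end Paper
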